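/- arXiv:2308.02709 — 2 statements merged into one kernel-verified Lean document; each statement's English description precedes it below -/
import Mathlib

section
/- (Equivalence of the original and pruned upper-bound LPs) The optimal value of the original upper-bound LP, max{ Σ_{r ∈ R_Q} q_r : Σ_{r ∈ R_{v_B.v_A}} q_r = p_{v_B.v_A} for all (v_A, v_B), q ≥ 0 }, equals the optimal value of the pruned LP, max{ Σ_{h ∈ H} c_h^U q_h : Σ_{h ∈ H: h(v_A) = v_B} q_h = p_{v_B.v_A} for all (v_A, v_B), q ≥ 0 }, where c_h^U = 1{R_h ∩ R_Q ≠ ∅}. -/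
open Classical

/-- A partitioned causal graph on binary variables `V_0, …, V_{n-1}`, listed in
topologically sorted order.  Indices `< a` form the index set `A` (context
variables, which have no parents and topologically precede the rest), indices
`≥ a` form the index set `B`.  `parents j` is the set of indices of `pa(V_j)`. -/
structure CausalGraph where
  n : ℕ
  a : ℕ
  a_le : a ≤ n
  parents : Fin n → Finset (Fin n)
  sorted : ∀ j i : Fin n, i ∈ parents j → i < j
  noParentsA : ∀ j : Fin n, j.val < a → parents j = ∅

namespace CausalGraph

variable (G : CausalGraph)

/-- Indices of the `A` (context) variables. -/
abbrev AIdx := {i : Fin G.n // i.val < G.a}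

/-- Indices of the `B` variables. -/
abbrev BIdx := {i : Fin G.n // G.a ≤ i.val}

/-- Assignments of binary values to the `A` variables (`{0,1}^{|A|}`). -/
abbrev AAssign := G.AIdx → Bool

/-- Assignments of binary values to the `B` variables (`{0,1}^{|B|}`). -/
abbrev BAssign := G.BIdx → Bool

/-- A family of candidate response functions, one for each node, each reading a
full assignment of all variables. -/
abbrev Resp := Fin G.n → ((Fin G.n → Bool) → Bool)

/-- A response family is admissible when each component depends only on the
values of the parents of the corresponding node.  This encodes membership in
`R = ∏_{j∈B} F_j`, where `F_j` is the set of ALL functions from values of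
`pa(V_j)` to `{0,1}`. -/
def IsResponse (r : G.Resp) : Prop :=
  ∀ j : Fin G.n, ∀ v w : Fin G.n → Bool, (∀ i ∈ G.parents j, v i = w i) → r j v = r j w

/-- The response-function set `R`. -/
def R : Set G.Resp := {r | G.IsResponse r}

/-- One step of evaluation: `A` variables read the context, `B` variables apply
their response functions to the current assignment. -/
def evalStep (r : G.Resp) (vA : G.AAssign) (v : Fin G.n → Bool) : Fin G.n → Bool :=
  fun j => if h : j.val < G.a then vA ⟨j, h⟩ else r j v

/-- Evaluation of all variables from the context `vA` and the response family
`r`, in topological order (realized by `n`-fold iteration of `evalStep`, which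
is exact since each parent index precedes its child's index). -/
def eval (r : G.Resp) (vA : G.AAssign) : Fin G.n → Bool :=
  (G.evalStep r vA)^[G.n] (fun _ => false)

/-- `F_B(v_A, r)`: the values of the `B` variables determined by `v_A` and `r`. -/
def FB (r : G.Resp) (vA : G.AAssign) : G.BAssign := fun j => G.eval r vA j.1

/-- A hyperarc `h : {0,1}^{|A|} → {0,1}^{|B|}`. -/
abbrev Hyperarc := G.AAssign → G.BAssign

/-- `R_h`: the admissible responses consistent with hyperarc `h` on every input. -/
def Rh (h : G.Hyperarc) : Set G.Resp :=
  {r ∈ G.R | ∀ vA : G.AAssign, G.FB r vA = h vA}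

/-- A hyperarc is valid when `R_h ≠ ∅`. -/
def Valid (h : G.Hyperarc) : Prop := (G.Rh h).Nonempty

/-- The set `H` of valid hyperarcs. -/
def H : Set G.Hyperarc := {h | G.Valid h}

/-- `R_{v_B.v_A}`: responses mapping the context `v_A` to the values `v_B` of `V_B`. -/
def RvBvA (vA : G.AAssign) (vB : G.BAssign) : Set G.Resp :=
  {r ∈ G.R | G.FB r vA = vB}

/-- Restriction of a full assignment to the `A` variables. -/
def restrictA (v : Fin G.n → Bool) : G.AAssign := fun i => v i.1

/-- Restriction of a full assignment to the `B` variables. -/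
def restrictB (v : Fin G.n → Bool) : G.BAssign := fun j => v j.1

/-- The full assignment determined by a context `vA` and a hyperarc `h`. -/
def extendA (h : G.Hyperarc) (vA : G.AAssign) : Fin G.n → Bool :=
  fun i => if hi : i.val < G.a then vA ⟨i, hi⟩ else h vA ⟨i, not_lt.mp hi⟩

/-- One step of evaluation under the intervention `do(V_I = q_I)`: the
mechanisms of the intervened variables are ignored. -/
def evalDoStep (I : Finset (Fin G.n)) (qI : Fin G.n → Bool) (r : G.Resp)
    (qA : G.AAssign) (v : Fin G.n → Bool) : Fin G.n → Bool :=
  fun j => if h : j.val < G.a then qA ⟨j, h⟩ else if j ∈ I then qI j else r j v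

/-- Evaluation of all variables under the intervention `do(V_I = q_I)`,
in context `V_A = q_A`, using the response family `r`. -/
def evalDo (I : Finset (Fin G.n)) (qI : Fin G.n → Bool) (r : G.Resp)
    (qA : G.AAssign) : Fin G.n → Bool :=
  (G.evalDoStep I qI r qA)^[G.n] (fun _ => false)

/-- A causal query `P(V_O(V_I = q_I) = q_O | V_A = q_A)`: disjoint sets
`O, I ⊆ B` together with the values `q_A`, `q_I`, `q_O`. -/
structure Query (G : CausalGraph) where
  O : Finset (Fin G.n)
  I : Finset (Fin G.n)
  O_sub : ∀ j ∈ O, G.a ≤ j.val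
  I_sub : ∀ j ∈ I, G.a ≤ j.val
  disjOI : Disjoint O I
  qA : G.AAssign
  qI : Fin G.n → Bool
  qO : Fin G.n → Bool

/-- `R_Q`: the admissible responses consistent with the query, i.e. those with
`F_O((q_A, q_I), r) = q_O`. -/
def RQ (Q : G.Query) : Set G.Resp :=
  {r ∈ G.R | ∀ j ∈ Q.O, G.evalDo Q.I Q.qI r Q.qA j = Q.qO j}

/-- Edges of the mutilated graph `G^{do(V_I = q_I)}` (all edges into `V_I` deleted). -/
def doEdge (I : Finset (Fin G.n)) (i j : Fin G.n) : Prop := j ∉ I ∧ i ∈ G.parents j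

/-- `C(Q)`: the critical variables for the query, i.e. those with a directed
path to some variable of `V_O` in the mutilated graph `G^{do(V_I = q_I)}`. -/
def critical (Q : G.Query) : Set (Fin G.n) :=
  {i | ∃ o ∈ Q.O, Relation.ReflTransGen (G.doEdge Q.I) i o}

/-- An observation `{V_W = q_W}` with `W ⊆ B`, in context `V_A = q_A`. -/
structure Obs (G : CausalGraph) where
  W : Finset (Fin G.n)
  W_sub : ∀ j ∈ W, G.a ≤ j.val
  qA : G.AAssign
  qW : Fin G.n → Bool

/-- `R_W`: the admissible responses consistent with the observation, i.e. those
with `F_W(q_A, r) = q_W`. -/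
def RW (Ob : G.Obs) : Set G.Resp :=
  {r ∈ G.R | ∀ j ∈ Ob.W, G.eval r Ob.qA j = Ob.qW j}

/-- Edges of the causal graph `G` itself. -/
def edge (i j : Fin G.n) : Prop := i ∈ G.parents j

/-- `C(W)`: the critical variables for the observation: the `A`-variables with
a directed path in `G` to some variable of `V_W`. -/
def criticalW (Ob : G.Obs) : Set (Fin G.n) :=
  {i | i.val < G.a ∧ ∃ w ∈ Ob.W, Relation.ReflTransGen G.edge i w}

end CausalGraph

open CausalGraph

/-- The sum `Σ_{x ∈ s} f x` of `f` over a subset `s` of a finite type. -/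
noncomputable def setSum {α : Type*} [Fintype α] (s : Set α) (f : α → ℝ) : ℝ :=
  ∑ x : α, if x ∈ s then f x else 0

/-! Grouping the response functions by the hyperarc they induce turns a solution of the original LP
into one of the pruned LP: add up the masses in each class `R_h`. Conversely, put the mass of each
valid hyperarc `h` on one representative of `R_h`, chosen in `R_Q` whenever `R_h` meets `R_Q`. Both
maps are pushforwards of masses, along `f = F_B` on `R` and along a section `σ` of it on
`H = f(R)`. A pushforward sums over a set to what the original masses sum to over its preimage,
which gives the constraints. As `R_Q ⊆ R ∩ f⁻¹(f(R_Q))`, the first map does not decrease the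
objective; as `H ∩ σ⁻¹(R_Q) = f(R_Q)`, the second one preserves it. -/

section SetSum

variable {α β : Type*} [Fintype α] {s t : Set α} {q : α → ℝ}

lemma setSum_eq_sum_filter (s : Set α) (q : α → ℝ) : setSum s q = ∑ a with a ∈ s, q a :=
  (Finset.sum_filter _ _).symm

lemma setSum_nonneg (hq : ∀ a ∈ s, 0 ≤ q a) : 0 ≤ setSum s q := by
  rw [setSum_eq_sum_filter]
  exact Finset.sum_nonneg fun a ha => hq a (Finset.mem_filter_univ a |>.1 ha)

lemma setSum_mono_set (hst : s ⊆ t) (hq : ∀ a ∈ t, 0 ≤ q a) : setSum s q ≤ setSum t q := by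
  simp only [setSum_eq_sum_filter]
  refine Finset.sum_le_sum_of_subset_of_nonneg (Finset.monotone_filter_right _ fun a _ => @hst a) ?_
  exact fun a ha _ => hq a (Finset.mem_filter_univ a |>.1 ha)

/-- The pushforward along `f` of the masses `q` restricted to `s`: the point `b` receives the total
mass of the part of its fibre lying in `s`. It carries solutions of one LP to solutions of
another. -/
noncomputable def pushforward (f : α → β) (s : Set α) (q : α → ℝ) (b : β) : ℝ :=
  setSum (s ∩ f ⁻¹' {b}) q

lemma setSum_pushforward [Fintype β] (f : α → β) (s : Set α) (q : α → ℝ) (t : Set β) :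
    setSum t (pushforward f s q) = setSum (s ∩ f ⁻¹' t) q := by
  simpa only [pushforward, setSum_eq_sum_filter, Finset.filter_filter, Finset.mem_filter_univ,
    Set.mem_inter_iff, Set.mem_preimage, Set.mem_singleton_iff] using
    Finset.sum_fiberwise_eq_sum_filter {a | a ∈ s} {b | b ∈ t} f q

end SetSum

section RightInverse

open Set Function

variable {α β : Type*} {f : α → β} {σ : β → α} {s S : Set α} {u : Set β}

lemma exists_rightInvOn_image_mapsTo_of_subset [Nonempty α] (f : α → β) (hS : S ⊆ s) :
    ∃ σ : β → α, RightInvOn σ f (f '' s) ∧ MapsTo σ (f '' s) s ∧ MapsTo σ (f '' S) S := by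
  refine ⟨fun b => if b ∈ f '' S then invFunOn f S b else invFunOn f s b, ?_, ?_, ?_⟩
  · intro b hb
    dsimp only
    split_ifs with hbS
    exacts [invFunOn_eq hbS, invFunOn_eq hb]
  · intro b hb
    dsimp only
    split_ifs with hbS
    exacts [hS (invFunOn_mem hbS), invFunOn_mem hb]
  · intro b hbS
    dsimp only
    rw [if_pos hbS]
    exact invFunOn_mem hbS

lemma inter_preimage_inter_preimage_of_rightInvOn (hinv : RightInvOn σ f u)
    (hmaps : MapsTo σ u s) (t : Set β) : u ∩ σ ⁻¹' (s ∩ f ⁻¹' t) = u ∩ t := by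
  ext b
  refine and_congr_right fun hb => ?_
  simp only [mem_preimage, mem_inter_iff, hmaps hb, hinv hb, true_and]

lemma inter_preimage_eq_image_of_rightInvOn (hinv : RightInvOn σ f u) (hSu : f '' S ⊆ u)
    (hmaps : MapsTo σ (f '' S) S) : u ∩ σ ⁻¹' S = f '' S := by
  refine Subset.antisymm ?_ (subset_inter hSu hmaps)
  rintro b ⟨hb, hσb⟩
  exact ⟨σ b, hσb, hinv hb⟩

end RightInverse

section LinearProgram

variable {α β ι : Type*} [Fintype α] [Fintype β] {s S : Set α}

/-- Feasibility of `q` for the constraints `Σ_{a ∈ C i} q_a = p_i` and `q ≥ 0`. Both LPs have this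
form, with `i` ranging over the pairs `(v_A, v_B)`. -/
def IsFeasible (C : ι → Set α) (p : ι → ℝ) (q : α → ℝ) : Prop :=
  (∀ a, 0 ≤ q a) ∧ ∀ i, setSum (C i) q = p i

lemma IsFeasible.pushforward {f : α → β} {C : ι → Set β} {p : ι → ℝ} {q : α → ℝ}
    (hq : IsFeasible (fun i => s ∩ f ⁻¹' C i) p q) : IsFeasible C p (pushforward f s q) :=
  ⟨fun _ => setSum_nonneg fun a _ => hq.1 a, fun i => (setSum_pushforward f s q _).trans (hq.2 i)⟩

lemma exists_isFeasible_image_setSum_le (f : α → β) (hS : S ⊆ s) (C : ι → Set β) (p : ι → ℝ)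
    {q : α → ℝ} (hq : IsFeasible (fun i => s ∩ f ⁻¹' C i) p q) :
    ∃ w, IsFeasible (fun i => f '' s ∩ C i) p w ∧ setSum S q ≤ setSum (f '' S) w := by
  have hpre (t : Set β) : s ∩ f ⁻¹' (f '' s ∩ t) = s ∩ f ⁻¹' t := by
    rw [Set.preimage_inter, ← Set.inter_assoc,
      Set.inter_eq_left.2 (Set.subset_preimage_image f s)]
  refine ⟨pushforward f s q, IsFeasible.pushforward (by simpa only [hpre] using hq), ?_⟩
  rw [setSum_pushforward]
  exact setSum_mono_set (Set.subset_inter hS (Set.subset_preimage_image f S)) fun a _ => hq.1 a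

lemma exists_isFeasible_setSum_eq_image [Nonempty α] (f : α → β) (hS : S ⊆ s) (C : ι → Set β)
    (p : ι → ℝ) {w : β → ℝ} (hw : IsFeasible (fun i => f '' s ∩ C i) p w) :
    ∃ q, IsFeasible (fun i => s ∩ f ⁻¹' C i) p q ∧ setSum S q = setSum (f '' S) w := by
  obtain ⟨σ, hinv, hσs, hσS⟩ := exists_rightInvOn_image_mapsTo_of_subset f hS
  refine ⟨pushforward σ (f '' s) w, IsFeasible.pushforward ?_, ?_⟩
  · simpa only [inter_preimage_inter_preimage_of_rightInvOn hinv hσs] using hw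
  · rw [setSum_pushforward, inter_preimage_eq_image_of_rightInvOn hinv (Set.image_mono hS) hσS]

theorem pruned_LP_upper_equiv_general [Nonempty α] (f : α → β) (hS : S ⊆ s) (C : ι → Set β)
    (p : ι → ℝ) :
    (sSup {y : ℝ | ∃ q, IsFeasible (fun i => s ∩ f ⁻¹' C i) p q ∧ y = setSum S q} =
      sSup {y : ℝ | ∃ w, IsFeasible (fun i => f '' s ∩ C i) p w ∧ y = setSum (f '' S) w}) ∧
    (∀ q, IsFeasible (fun i => s ∩ f ⁻¹' C i) p q →
      ∃ w, IsFeasible (fun i => f '' s ∩ C i) p w ∧ setSum S q ≤ setSum (f '' S) w) ∧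
    (∀ w, IsFeasible (fun i => f '' s ∩ C i) p w →
      ∃ q, IsFeasible (fun i => s ∩ f ⁻¹' C i) p q ∧ setSum (f '' S) w ≤ setSum S q) := by
  have hto q (hq : IsFeasible (fun i => s ∩ f ⁻¹' C i) p q) :=
    exists_isFeasible_image_setSum_le f hS C p hq
  have hfrom w (hw : IsFeasible (fun i => f '' s ∩ C i) p w) :
      ∃ q, IsFeasible (fun i => s ∩ f ⁻¹' C i) p q ∧ setSum (f '' S) w ≤ setSum S q :=
    (exists_isFeasible_setSum_eq_image f hS C p hw).imp fun _ => And.imp_right Eq.ge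
  refine ⟨csSup_eq_csSup_of_forall_exists_le ?_ ?_, hto, hfrom⟩
  · rintro _ ⟨q, hq, rfl⟩
    obtain ⟨w, hw, hle⟩ := hto q hq
    exact ⟨_, ⟨w, hw, rfl⟩, hle⟩
  · rintro _ ⟨w, hw, rfl⟩
    obtain ⟨q, hq, hle⟩ := hfrom w hw
    exact ⟨_, ⟨q, hq, rfl⟩, hle⟩

end LinearProgram

namespace CausalGraph

variable (G : CausalGraph)

lemma H_eq_image : G.H = G.FB '' G.R :=
  Set.ext fun _ => exists_congr fun _ => and_congr_right fun _ => funext_iff.symm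

lemma RQ_subset_R (Q : G.Query) : G.RQ Q ⊆ G.R := fun _ hr => hr.1

lemma setOf_Rh_inter_nonempty_eq_image {S : Set G.Resp} (hS : S ⊆ G.R) :
    {h ∈ G.H | (G.Rh h ∩ S).Nonempty} = G.FB '' S := by
  ext h
  constructor
  · rintro ⟨-, r, ⟨-, hrh⟩, hrS⟩
    exact ⟨r, hrS, funext hrh⟩
  · rintro ⟨r, hrS, rfl⟩
    exact ⟨⟨r, hS hrS, fun _ => rfl⟩, r, ⟨hS hrS, fun _ => rfl⟩, hrS⟩

lemma isFeasible_R_inter_preimage_iff {p : G.AAssign → G.BAssign → ℝ} {q : G.Resp → ℝ} :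
    IsFeasible (fun v : G.AAssign × G.BAssign => G.R ∩ G.FB ⁻¹' {h | h v.1 = v.2})
        (fun v => p v.1 v.2) q ↔
      (∀ r, 0 ≤ q r) ∧ ∀ vA vB, setSum (G.RvBvA vA vB) q = p vA vB :=
  and_congr_right' Prod.forall

lemma isFeasible_H_inter_iff {p : G.AAssign → G.BAssign → ℝ} {w : G.Hyperarc → ℝ} :
    IsFeasible (fun v : G.AAssign × G.BAssign => G.H ∩ {h | h v.1 = v.2})
        (fun v => p v.1 v.2) w ↔
      (∀ h, 0 ≤ w h) ∧ ∀ vA vB, setSum {h ∈ G.H | h vA = vB} w = p vA vB :=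
  and_congr_right' Prod.forall

end CausalGraph

/-- Equivalence of the original and pruned upper-bound LPs: the
optimal value of `max{ Σ_{r∈R_Q} q_r : Σ_{r∈R_{v_B.v_A}} q_r = p_{v_B.v_A} ∀(v_A,v_B), q ≥ 0 }`
equals that of `max{ Σ_{h∈H} c_h^U q_h : Σ_{h∈H: h(v_A)=v_B} q_h = p_{v_B.v_A} ∀(v_A,v_B), q ≥ 0 }`
with `c_h^U = 1{R_h ∩ R_Q ≠ ∅}`. -/
theorem pruned_LP_upper_equiv (G : CausalGraph) (Q : G.Query)
    (p : G.AAssign → G.BAssign → ℝ) :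
    (sSup {y : ℝ | ∃ q : G.Resp → ℝ, (∀ r, 0 ≤ q r) ∧
          (∀ (vA : G.AAssign) (vB : G.BAssign), setSum (G.RvBvA vA vB) q = p vA vB) ∧
          y = setSum (G.RQ Q) q} =
      sSup {y : ℝ | ∃ qh : G.Hyperarc → ℝ, (∀ h, 0 ≤ qh h) ∧
          (∀ (vA : G.AAssign) (vB : G.BAssign),
            setSum {h ∈ G.H | h vA = vB} qh = p vA vB) ∧
          y = setSum {h ∈ G.H | (G.Rh h ∩ G.RQ Q).Nonempty} qh}) ∧
    (∀ q : G.Resp → ℝ, (∀ r, 0 ≤ q r) →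
      (∀ (vA : G.AAssign) (vB : G.BAssign), setSum (G.RvBvA vA vB) q = p vA vB) →
      ∃ qh : G.Hyperarc → ℝ, (∀ h, 0 ≤ qh h) ∧
        (∀ (vA : G.AAssign) (vB : G.BAssign),
          setSum {h ∈ G.H | h vA = vB} qh = p vA vB) ∧
        setSum (G.RQ Q) q ≤ setSum {h ∈ G.H | (G.Rh h ∩ G.RQ Q).Nonempty} qh) ∧
    (∀ qh : G.Hyperarc → ℝ, (∀ h, 0 ≤ qh h) →
      (∀ (vA : G.AAssign) (vB : G.BAssign),
        setSum {h ∈ G.H | h vA = vB} qh = p vA vB) →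
      ∃ q : G.Resp → ℝ, (∀ r, 0 ≤ q r) ∧
        (∀ (vA : G.AAssign) (vB : G.BAssign), setSum (G.RvBvA vA vB) q = p vA vB) ∧
        setSum {h ∈ G.H | (G.Rh h ∩ G.RQ Q).Nonempty} qh ≤ setSum (G.RQ Q) q) := by
  simpa only [← G.H_eq_image, ← G.setOf_Rh_inter_nonempty_eq_image (G.RQ_subset_R Q),
    G.isFeasible_R_inter_preimage_iff, G.isFeasible_H_inter_iff, and_assoc, and_imp] using
    pruned_LP_upper_equiv_general G.FB (G.RQ_subset_R Q)
      (fun v : G.AAssign × G.BAssign => {h | h v.1 = v.2}) (fun v => p v.1 v.2)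
end

section
/- For a valid hyperarc h: R_h ⊆ R_W if, and only if, there exists v ∈ {0,1}^{|N|} such that h(v_A) = v_B, v_{C(W)} = q_{C(W)}, and v_W = q_W. -/
open Classical

open CausalGraph

/-!
In context `v_A`, the value of `V_j` computed from a response family depends only on the
coordinates of `v_A` with a directed path to `j`.  A valid hyperarc `h` is realized by some response
family, so `v_A ↦ (v_A, h v_A)` inherits this locality.  Every member of `R_h` evaluates to
`(q_A, h q_A)` in context `q_A`, so `R_h ⊆ R_W` says precisely that `(q_A, h q_A)` matches `q_W` on
`W`; by locality, `q_A` may be replaced here by any context that agrees with it on `C(W)`.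
-/

namespace CausalGraph

variable {G : CausalGraph}

/-- The context variables with a directed path in `G` to `V_j`, paths of length `0` included.  It is
a set of `G.AIdx` rather than of `Fin G.n` so that `DependsOn` applies to functions of a context. -/
def contextAncestors (G : CausalGraph) (j : Fin G.n) : Set G.AIdx :=
  {i | Relation.ReflTransGen G.edge i.1 j}

theorem contextAncestors_subset_of_mem_parents {i j : Fin G.n} (hij : i ∈ G.parents j) :
    G.contextAncestors i ⊆ G.contextAncestors j :=
  fun _ hc => Relation.ReflTransGen.tail hc hij

theorem IsResponse.dependsOn_iterate_evalStep {r : G.Resp} (hr : G.IsResponse r)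
    (u : Fin G.n → Bool) (k : ℕ) (j : Fin G.n) :
    DependsOn (fun vA => (G.evalStep r vA)^[k] u j) (G.contextAncestors j) := by
  induction k generalizing j with
  | zero => exact fun _ _ _ => rfl
  | succ k ih =>
    intro vA wA hvw
    simp only [Function.iterate_succ_apply', evalStep]
    split_ifs with hj
    · exact hvw ⟨j, hj⟩ Relation.ReflTransGen.refl
    · exact hr j _ _ fun i hi =>
        (ih i).mono (contextAncestors_subset_of_mem_parents hi) hvw

theorem IsResponse.dependsOn_eval {r : G.Resp} (hr : G.IsResponse r) (j : Fin G.n) :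
    DependsOn (fun vA => G.eval r vA j) (G.contextAncestors j) :=
  hr.dependsOn_iterate_evalStep _ _ j

theorem iterate_evalStep_apply_context (r : G.Resp) (vA : G.AAssign) (u : Fin G.n → Bool)
    {k : ℕ} (hk : k ≠ 0) (i : G.AIdx) : (G.evalStep r vA)^[k] u i.1 = vA i := by
  obtain ⟨m, rfl⟩ := Nat.exists_eq_succ_of_ne_zero hk
  rw [Function.iterate_succ_apply']
  exact dif_pos i.2

theorem restrictA_eval (r : G.Resp) (vA : G.AAssign) : G.restrictA (G.eval r vA) = vA :=
  funext fun i => iterate_evalStep_apply_context r vA _ i.1.pos.ne' i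

theorem restrictA_extendA (h : G.Hyperarc) (vA : G.AAssign) :
    G.restrictA (G.extendA h vA) = vA :=
  funext fun i => dif_pos i.2

theorem restrictB_extendA (h : G.Hyperarc) (vA : G.AAssign) :
    G.restrictB (G.extendA h vA) = h vA :=
  funext fun j => dif_neg j.2.not_gt

theorem eq_extendA_iff {h : G.Hyperarc} {vA : G.AAssign} {v : Fin G.n → Bool} :
    v = G.extendA h vA ↔ G.restrictA v = vA ∧ G.restrictB v = h vA := by
  constructor
  · rintro rfl
    exact ⟨restrictA_extendA h vA, restrictB_extendA h vA⟩
  · rintro ⟨rfl, hB⟩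
    funext i
    unfold extendA
    split_ifs with hi
    · rfl
    · exact congrFun hB ⟨i, not_lt.mp hi⟩

theorem eval_eq_extendA_of_mem_Rh {h : G.Hyperarc} {r : G.Resp} (hr : r ∈ G.Rh h)
    (vA : G.AAssign) : G.eval r vA = G.extendA h vA :=
  eq_extendA_iff.2 ⟨restrictA_eval r vA, hr.2 vA⟩

theorem mem_RW_iff_of_mem_Rh {h : G.Hyperarc} {r : G.Resp} (hr : r ∈ G.Rh h) (Ob : G.Obs) :
    r ∈ G.RW Ob ↔ ∀ j ∈ Ob.W, G.extendA h Ob.qA j = Ob.qW j := by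
  rw [← eval_eq_extendA_of_mem_Rh hr]
  exact and_iff_right hr.1

theorem Valid.Rh_subset_RW_iff_extendA {h : G.Hyperarc} (hh : G.Valid h) (Ob : G.Obs) :
    G.Rh h ⊆ G.RW Ob ↔ ∀ j ∈ Ob.W, G.extendA h Ob.qA j = Ob.qW j := by
  obtain ⟨r, hr⟩ := hh
  exact ⟨fun hsub => (mem_RW_iff_of_mem_Rh hr Ob).1 (hsub hr),
    fun hW _ hs => (mem_RW_iff_of_mem_Rh hs Ob).2 hW⟩

theorem Valid.dependsOn_extendA {h : G.Hyperarc} (hh : G.Valid h) (j : Fin G.n) :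
    DependsOn (fun vA => G.extendA h vA j) (G.contextAncestors j) := by
  obtain ⟨r, hr⟩ := hh
  simpa only [eval_eq_extendA_of_mem_Rh hr] using IsResponse.dependsOn_eval hr.1 j

end CausalGraph

/-- for a valid hyperarc `h`: `R_h ⊆ R_W` iff there exists
`v ∈ {0,1}^{|N|}` with `h(v_A) = v_B`, `v_{C(W)} = q_{C(W)}`, and `v_W = q_W`. -/
theorem Rh_subset_RW_iff (G : CausalGraph) (Ob : G.Obs)
    (h : G.Hyperarc) (hh : G.Valid h) :
    G.Rh h ⊆ G.RW Ob ↔ ∃ v : Fin G.n → Bool,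
      h (G.restrictA v) = G.restrictB v ∧
      (∀ i : G.AIdx, i.1 ∈ G.criticalW Ob → v i.1 = Ob.qA i) ∧
      (∀ j ∈ Ob.W, v j = Ob.qW j) := by
  rw [hh.Rh_subset_RW_iff_extendA]
  constructor
  · intro hW
    refine ⟨G.extendA h Ob.qA, ?_, fun i _ => congrFun (restrictA_extendA h Ob.qA) i, hW⟩
    rw [restrictA_extendA, restrictB_extendA]
  · rintro ⟨v, hv, hC, hW⟩ j hj
    calc G.extendA h Ob.qA j
        = G.extendA h (G.restrictA v) j := hh.dependsOn_extendA j fun i hi =>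
          (hC i ⟨i.2, j, hj, hi⟩).symm
      _ = v j := congrFun (eq_extendA_iff.2 ⟨rfl, hv.symm⟩).symm j
      _ = Ob.qW j := hW j hj
end
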